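/- arXiv:0708.3310 — 6 statements merged into one kernel-verified Lean document; each statement's English description precedes it below -/
import Mathlib

section
/- Let n ≥ 3 be an integer, φ₀ > 0, and set a = φ₀^{-2(n-1)}. Then the function τ ↦ (a·τ^{2(n-1)} − 1)^{-1/2} is integrable on the interval (φ₀, ∞); in particular the improper integral S(φ₀) = ∫_{φ₀}^{∞} (a·τ^{2(n-1)} − 1)^{-1/2} dτ is finite. -/
/-!
Rescaling by `x = τ / φ₀` turns the integrand into `(x ^ (2m) - 1) ^ (-1/2)` on `(1, ∞)` with
`m = n - 1 ≥ 2`. Near the singular endpoint, on `(1, 2]`, it is dominated by `(x - 1) ^ (-1/2)`,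
since `x ^ (2m) ≥ x`. On `(2, ∞)` one has `x ^ (2m) - 1 ≥ x ^ 4 - 1 ≥ x ^ 4 / 4`, so it is
dominated by `2 * x ^ (-2)`. Both majorants are integrable.
-/

open MeasureTheory Set in
/-- The case `φ₀ = 1`, with the exponent `2 * (n - 1)` replaced by any `k ≥ 4`. -/
lemma integrableOn_pow_sub_one_rpow (k : ℕ) (hk : 4 ≤ k) :
    IntegrableOn (fun x : ℝ => (x ^ k - 1) ^ (-(1 / 2 : ℝ))) (Ioi 1) := by
  have hmeas : Measurable (fun x : ℝ => (x ^ k - 1) ^ (-(1 / 2 : ℝ))) := by fun_prop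
  rw [← Ioc_union_Ioi_eq_Ioi (show (1 : ℝ) ≤ 2 by norm_num)]
  refine IntegrableOn.union ?_ ?_
  · have hmaj : IntegrableOn (fun x : ℝ => (x - 1) ^ (-(1 / 2 : ℝ))) (Ioc 1 2) := by
      rw [← intervalIntegrable_iff_integrableOn_Ioc_of_le (by norm_num)]
      have h := (intervalIntegral.intervalIntegrable_rpow' (a := 0) (b := 1)
        (show (-1 : ℝ) < -(1 / 2) by norm_num)).comp_sub_right 1
      norm_num at h ⊢
      exact h
    refine hmaj.mono' hmeas.aestronglyMeasurable ?_
    filter_upwards [ae_restrict_mem measurableSet_Ioc] with x hx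
    have h1 : x ≤ x ^ k := le_self_pow₀ hx.1.le (by omega)
    have h0 : 0 < x - 1 := sub_pos.2 hx.1
    rw [Real.norm_of_nonneg (Real.rpow_nonneg (by linarith) _)]
    exact Real.rpow_le_rpow_of_nonpos h0 (by linarith) (by norm_num)
  · have hmaj : IntegrableOn (fun x : ℝ => 2 * x ^ (-2 : ℝ)) (Ioi 2) :=
      (integrableOn_Ioi_rpow_of_lt (by norm_num) (by norm_num)).const_mul 2
    refine hmaj.mono' hmeas.aestronglyMeasurable ?_
    filter_upwards [ae_restrict_mem measurableSet_Ioi] with x hx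
    have hx2 : (2 : ℝ) < x := hx
    have h1 : x ^ 4 ≤ x ^ k := pow_le_pow_right₀ (by linarith) hk
    have h2 : (x ^ 2 / 2) ^ 2 ≤ x ^ k - 1 := by nlinarith [sq_nonneg (x ^ 2 - 4)]
    have hpos : 0 < x ^ 2 / 2 := by positivity
    rw [Real.norm_of_nonneg (Real.rpow_nonneg ((sq_nonneg _).trans h2) _)]
    refine (Real.rpow_le_rpow_of_nonpos (pow_pos hpos 2) h2 (by norm_num)).trans_eq ?_
    rw [← Real.rpow_natCast (x ^ 2 / 2) 2, ← Real.rpow_mul hpos.le]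
    norm_num [Real.rpow_neg_one, Real.rpow_neg (show 0 ≤ x by linarith)]
    ring

/-- **Finite half-height of the higher-dimensional catenoid.**
For `n ≥ 3` and `φ₀ > 0`, with `a = φ₀^(-2(n-1))`, the function
`τ ↦ (a·τ^(2(n-1)) − 1)^(-1/2)` is integrable on `(φ₀, ∞)`; in particular the improper
integral `S(φ₀) = ∫_{φ₀}^∞ (a·τ^(2(n-1)) − 1)^(-1/2) dτ` is finite. -/
theorem catenoid_height_integral_finite
    (n : ℕ) (hn : 3 ≤ n) (φ₀ : ℝ) (hφ₀ : 0 < φ₀)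
    (a : ℝ) (ha : a = φ₀ ^ (-(2 * ((n : ℤ) - 1)))) :
    MeasureTheory.IntegrableOn
      (fun τ : ℝ => (a * τ ^ (2 * (n - 1)) - 1) ^ (-(1 / 2 : ℝ)))
      (Set.Ioi φ₀) MeasureTheory.volume := by
  have h := (MeasureTheory.integrableOn_Ioi_comp_mul_left_iff
    (fun x : ℝ => (x ^ (2 * (n - 1)) - 1) ^ (-(1 / 2 : ℝ))) φ₀ (inv_pos.2 hφ₀)).2
    (by
      rw [inv_mul_cancel₀ hφ₀.ne']
      exact integrableOn_pow_sub_one_rpow _ (by omega))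
  have ha' : a = φ₀⁻¹ ^ (2 * (n - 1)) := by
    rw [ha, zpow_neg, inv_pow, ← zpow_natCast]
    congr 2
    push_cast [Nat.cast_sub (show 1 ≤ n by omega)]
    ring
  simpa only [ha', mul_pow] using h
end

section
/- Let n ≥ 3 be an integer, φ₀ > 0, a = φ₀^{-2(n-1)}, and S = ∫_{φ₀}^{∞} (a·τ^{2(n-1)} − 1)^{-1/2} dτ. Then there exists a twice continuously differentiable function φ : (−S, S) → ℝ with φ > 0, φ(0) = φ₀, φ'(0) = 0, satisfying φ''(s) = (n-1)(1+φ'(s)²)/φ(s) for all s ∈ (−S, S), and moreover φ(s) → +∞ as s → S from the left and as s → −S from the right. -/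
/-!
Parametrize the profile by its slope `t = φ'`. The first integral `1 + φ'² = (φ/φ₀)^(2(n-1))`
gives `φ = φ₀ (1 + t²)^p` with `p = 1/(2(n-1))`, and then
`ds = dφ / t = (φ₀/(n-1)) (1 + t²)^(p-1) dt`, whose density is smooth also at `t = 0`, unlike
the integrand defining `S`. The height `s(t)`, the integral of this density from `0` to `t`,
is an odd increasing bijection from `ℝ` onto `(-S, S)`: the density is integrable because
`2(1-p) > 1`, and the substitution `τ = φ₀ (1 + t²)^p` identifies its integral over `(0, ∞)`
with `S` (`integral_profile_eq`). If `T` is the inverse of `s`, then `φ = φ₀ (1 + T²)^p`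
satisfies `φ' = T` and `φ'' = T' = 1 / s'(T) = (n-1)(1 + T²)/φ`, and `φ` blows up where `T` does.
-/

open MeasureTheory Filter

/-- The derivative of the height `s` with respect to the slope `t`; here `m` stands for `n - 1`. -/
noncomputable def slopeDensity (φ₀ m t : ℝ) : ℝ :=
  φ₀ / m * (1 + t ^ 2) ^ (1 / (2 * m) - 1)

/-- The radius `φ` as a function of the slope `t`; here `m` stands for `n - 1`. -/
noncomputable def radiusOfSlope (φ₀ m t : ℝ) : ℝ :=
  φ₀ * (1 + t ^ 2) ^ (1 / (2 * m))

lemma slopeDensity_pos {φ₀ m : ℝ} (hφ₀ : 0 < φ₀) (hm : 0 < m) (t : ℝ) :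
    0 < slopeDensity φ₀ m t := by
  unfold slopeDensity
  positivity

lemma slopeDensity_continuous (φ₀ m : ℝ) : Continuous (slopeDensity φ₀ m) := by
  unfold slopeDensity
  refine continuous_const.mul (Continuous.rpow_const (by fun_prop) fun t => Or.inl ?_)
  positivity

lemma slopeDensity_integrable (φ₀ : ℝ) {m : ℝ} (hm : 2 ≤ m) :
    Integrable (slopeDensity φ₀ m) := by
  unfold slopeDensity
  refine Integrable.const_mul ?_ _
  have hlt : ((Module.finrank ℝ ℝ : ℕ) : ℝ) < 2 - 1 / m := by
    have : 1 / m ≤ 1 / 2 := one_div_le_one_div_of_le (by norm_num) hm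
    simp only [Module.finrank_self, Nat.cast_one]
    linarith
  have h := integrable_rpow_neg_one_add_norm_sq (μ := (volume : Measure ℝ)) hlt
  refine h.congr (Eventually.of_forall fun t => ?_)
  have hexp : -(2 - 1 / m) / 2 = 1 / (2 * m) - 1 := by
    field_simp
    ring
  simp only [Real.norm_eq_abs, sq_abs, hexp]

lemma radiusOfSlope_hasDerivAt (φ₀ : ℝ) {m : ℝ} (hm : 0 < m) (t : ℝ) :
    HasDerivAt (radiusOfSlope φ₀ m) (t * slopeDensity φ₀ m t) t := by
  unfold radiusOfSlope slopeDensity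
  have h1 : HasDerivAt (fun t : ℝ => 1 + t ^ 2) (2 * t) t := by
    simpa using ((hasDerivAt_pow 2 t).const_add 1)
  have h2 := (h1.rpow_const (p := 1 / (2 * m)) (Or.inl (by positivity))).const_mul φ₀
  refine h2.congr_deriv ?_
  field_simp

lemma inv_slopeDensity_eq {φ₀ m : ℝ} (hφ₀ : 0 < φ₀) (hm : 0 < m) (t : ℝ) :
    (slopeDensity φ₀ m t)⁻¹ = m * (1 + t ^ 2) / radiusOfSlope φ₀ m t := by
  unfold radiusOfSlope slopeDensity
  have hpos : 0 < 1 + t ^ 2 := by positivity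
  rw [Real.rpow_sub_one hpos.ne']
  field_simp

lemma radiusOfSlope_tendsto {φ₀ m : ℝ} (hφ₀ : 0 < φ₀) (hm : 0 < m) {α : Type*} {l : Filter α}
    {T : α → ℝ} (hT : Tendsto (fun x => |T x|) l atTop) :
    Tendsto (fun x => radiusOfSlope φ₀ m (T x)) l atTop := by
  unfold radiusOfSlope
  refine Tendsto.const_mul_atTop hφ₀ ((tendsto_rpow_atTop (by positivity)).comp ?_)
  refine tendsto_atTop_add_const_left _ _ ?_
  have := (tendsto_pow_atTop (two_ne_zero)).comp hT
  simpa [Function.comp_def] using this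

/-- The set `(φ₀, ∞)` is the image of `(0, ∞)` under the injective radius map. -/
lemma radiusOfSlope_image {φ₀ m : ℝ} (hφ₀ : 0 < φ₀) (hm : 0 < m) :
    Set.InjOn (radiusOfSlope φ₀ m) (Set.Ioi 0) ∧
      radiusOfSlope φ₀ m '' Set.Ioi 0 = Set.Ioi φ₀ := by
  have hcont : Continuous (radiusOfSlope φ₀ m) :=
    continuous_iff_continuousAt.2 fun t => (radiusOfSlope_hasDerivAt φ₀ hm t).continuousAt
  have hmono : StrictMonoOn (radiusOfSlope φ₀ m) (Set.Ici 0) := by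
    refine strictMonoOn_of_deriv_pos (convex_Ici 0) hcont.continuousOn fun t ht => ?_
    rw [interior_Ici] at ht
    rw [(radiusOfSlope_hasDerivAt φ₀ hm t).deriv]
    exact mul_pos ht (slopeDensity_pos hφ₀ hm t)
  have h0 : radiusOfSlope φ₀ m 0 = φ₀ := by simp [radiusOfSlope]
  refine ⟨(hmono.mono Set.Ioi_subset_Ici_self).injOn, Set.Subset.antisymm ?_ ?_⟩
  · rintro _ ⟨t, ht, rfl⟩
    have := hmono (Set.mem_Ici.2 le_rfl) (Set.mem_Ici.2 (le_of_lt ht)) ht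
    rwa [h0] at this
  · intro y hy
    have htop : Tendsto (fun t => radiusOfSlope φ₀ m t) atTop atTop :=
      radiusOfSlope_tendsto hφ₀ hm tendsto_abs_atTop_atTop
    obtain ⟨b, hb, hb0⟩ := ((htop.eventually_ge_atTop y).and (eventually_ge_atTop 0)).exists
    obtain ⟨t, ht, hty⟩ := intermediate_value_Icc hb0 hcont.continuousOn
      (show y ∈ Set.Icc (radiusOfSlope φ₀ m 0) (radiusOfSlope φ₀ m b) from
        ⟨by rw [h0]; exact le_of_lt hy, hb⟩)
    refine ⟨t, lt_of_le_of_ne ht.1 ?_, hty⟩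
    rintro rfl
    rw [h0] at hty
    exact absurd hty (ne_of_lt hy)

/-- The substitution `τ = φ₀ (1 + t²)^(1/(2(n-1)))` turns the singular integral defining `S`
into the integral of the smooth slope density. -/
lemma integral_profile_eq (n : ℕ) (hn : 3 ≤ n) (φ₀ : ℝ) (hφ₀ : 0 < φ₀)
    (a : ℝ) (ha : a = φ₀ ^ (-(2 * ((n : ℤ) - 1)))) :
    ∫ τ in Set.Ioi φ₀, (a * τ ^ (2 * (n - 1)) - 1) ^ (-(1 / 2 : ℝ)) =
      ∫ t in Set.Ioi 0, slopeDensity φ₀ ((n : ℝ) - 1) t := by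
  have hn' : (3 : ℝ) ≤ n := by exact_mod_cast hn
  have hm : (0 : ℝ) < (n : ℝ) - 1 := by linarith
  obtain ⟨hinj, himage⟩ := radiusOfSlope_image hφ₀ hm
  rw [← himage, integral_image_eq_integral_abs_deriv_smul measurableSet_Ioi
    (fun t _ => (radiusOfSlope_hasDerivAt φ₀ hm t).hasDerivWithinAt) hinj]
  refine setIntegral_congr_fun measurableSet_Ioi fun t ht => ?_
  have ht : 0 < t := ht
  have hcast : ((2 * (n - 1) : ℕ) : ℝ) = 2 * ((n : ℝ) - 1) := by
    rw [Nat.cast_mul, Nat.cast_sub (by omega)]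
    norm_num
  have ha' : a = (φ₀ ^ (2 * (n - 1)))⁻¹ := by
    have hz : (2 * ((n : ℤ) - 1)) = ((2 * (n - 1) : ℕ) : ℤ) := by omega
    rw [ha, hz, zpow_neg, zpow_natCast]
  have hpow : a * radiusOfSlope φ₀ ((n : ℝ) - 1) t ^ (2 * (n - 1)) = 1 + t ^ 2 := by
    unfold radiusOfSlope
    rw [mul_pow, ← Real.rpow_natCast ((1 + t ^ 2) ^ _), ← Real.rpow_mul (by positivity), hcast,
      one_div_mul_cancel (by positivity), Real.rpow_one, ha', ← mul_assoc,
      inv_mul_cancel₀ (by positivity), one_mul]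
  have hroot : (1 + t ^ 2 - 1) ^ (-(1 / 2 : ℝ)) = t⁻¹ := by
    rw [add_sub_cancel_left, Real.rpow_neg (by positivity), ← Real.sqrt_eq_rpow,
      Real.sqrt_sq ht.le]
  have hpos := slopeDensity_pos hφ₀ hm t
  simp only [smul_eq_mul]
  rw [hpow, hroot, abs_of_pos (mul_pos ht hpos)]
  field_simp

/-- **Existence of the catenoid profile on its maximal interval.**
For `n ≥ 3`, `φ₀ > 0`, `a = φ₀^(-2(n-1))` and
`S = ∫_{φ₀}^∞ (a·τ^(2(n-1)) − 1)^(-1/2) dτ`, there is a `C²` function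
`φ : (−S, S) → ℝ`, positive, with `φ 0 = φ₀`, `φ' 0 = 0`, solving the catenoid ODE
`φ'' = (n-1)(1+φ'²)/φ` on `(−S, S)`, and `φ(s) → +∞` as `s → S⁻` and as `s → (−S)⁺`. -/
theorem catenoid_profile_exists
    (n : ℕ) (hn : 3 ≤ n) (φ₀ : ℝ) (hφ₀ : 0 < φ₀)
    (a : ℝ) (ha : a = φ₀ ^ (-(2 * ((n : ℤ) - 1))))
    (S : ℝ)
    (hS : S = ∫ τ in Set.Ioi φ₀, (a * τ ^ (2 * (n - 1)) - 1) ^ (-(1 / 2 : ℝ))) :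
    ∃ φ : ℝ → ℝ,
      ContDiffOn ℝ 2 φ (Set.Ioo (-S) S) ∧
      (∀ s ∈ Set.Ioo (-S) S, 0 < φ s) ∧
      φ 0 = φ₀ ∧ deriv φ 0 = 0 ∧
      (∀ s ∈ Set.Ioo (-S) S,
        deriv (deriv φ) s = ((n : ℝ) - 1) * (1 + (deriv φ s) ^ 2) / φ s) ∧
      Tendsto φ (nhdsWithin S (Set.Iio S)) atTop ∧
      Tendsto φ (nhdsWithin (-S) (Set.Ioi (-S))) atTop := by
  have hn' : (3 : ℝ) ≤ n := by exact_mod_cast hn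
  rw [integral_profile_eq n hn φ₀ hφ₀ a ha] at hS
  obtain ⟨m, hmdef⟩ : ∃ m : ℝ, m = (n : ℝ) - 1 := ⟨_, rfl⟩
  rw [← hmdef] at hS ⊢
  have hm2 : 2 ≤ m := by linarith
  have hm : 0 < m := by linarith
  have hcont := slopeDensity_continuous φ₀ m
  obtain ⟨s, hs⟩ : ∃ s : ℝ → ℝ, s = fun t => ∫ x in (0 : ℝ)..t, slopeDensity φ₀ m x :=
    ⟨_, rfl⟩
  have hderiv : ∀ t, HasStrictDerivAt s (slopeDensity φ₀ m t) t := fun t => by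
    rw [hs]
    exact hcont.integral_hasStrictDerivAt 0 t
  have hscont : Continuous s :=
    continuous_iff_continuousAt.2 fun t => (hderiv t).hasDerivAt.continuousAt
  have hmono : StrictMono s := strictMono_of_deriv_pos fun t => by
    rw [(hderiv t).hasDerivAt.deriv]
    exact slopeDensity_pos hφ₀ hm t
  have hs0 : s 0 = 0 := by simp [hs]
  have hodd : ∀ t, s (-t) = -s t := fun t => by
    have h := intervalIntegral.integral_comp_neg (a := 0) (b := t) (slopeDensity φ₀ m)
    have heven : ∀ x, slopeDensity φ₀ m (-x) = slopeDensity φ₀ m x := fun x => by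
      simp [slopeDensity]
    simp only [heven, neg_zero] at h
    simp only [hs]
    rw [h, intervalIntegral.integral_symm]
  have hlim : Tendsto s atTop (nhds S) := by
    rw [hs, hS]
    exact intervalIntegral_tendsto_integral_Ioi 0
      (slopeDensity_integrable φ₀ hm2).integrableOn tendsto_id
  have hlt : ∀ t, s t < S := fun t =>
    (hmono (lt_add_one t)).trans_le (hmono.monotone.ge_of_tendsto hlim (t + 1))
  have hgt : ∀ t, -S < s t := fun t => by
    have := hlt (-t)
    rw [hodd] at this
    linarith
  have hSpos : 0 < S := hs0 ▸ hlt 0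
  have hlarge : ∀ x < S, ∃ t, x < s t := fun x hx => (hlim.eventually_const_lt hx).exists
  have hsurj : ∀ x ∈ Set.Ioo (-S) S, ∃ t, s t = x := fun x hx => by
    obtain ⟨t₁, h₁⟩ := hlarge x hx.2
    obtain ⟨t₂, h₂⟩ := hlarge (-x) (by linarith [hx.1])
    refine mem_range_of_exists_le_of_exists_ge hscont ⟨-t₂, ?_⟩ ⟨t₁, h₁.le⟩
    rw [hodd]
    linarith
  obtain ⟨T, hTs⟩ : ∃ T : ℝ → ℝ, ∀ t, T (s t) = t :=
    ⟨Function.invFun s, Function.leftInverse_invFun hmono.injective⟩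
  have hTderiv : ∀ x ∈ Set.Ioo (-S) S, HasDerivAt T (slopeDensity φ₀ m (T x))⁻¹ x := by
    intro x hx
    obtain ⟨t, rfl⟩ := hsurj x hx
    rw [hTs]
    exact ((hderiv t).to_local_left_inverse (slopeDensity_pos hφ₀ hm t).ne'
      (Eventually.of_forall hTs)).hasDerivAt
  have hφderiv : ∀ x ∈ Set.Ioo (-S) S,
      HasDerivAt (fun x => radiusOfSlope φ₀ m (T x)) (T x) x := by
    intro x hx
    have h := (radiusOfSlope_hasDerivAt φ₀ hm (T x)).comp x (hTderiv x hx)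
    rwa [mul_inv_cancel_right₀ (slopeDensity_pos hφ₀ hm (T x)).ne'] at h
  have hT0 : T 0 = 0 := by simpa [hs0] using hTs 0
  have h0mem : (0 : ℝ) ∈ Set.Ioo (-S) S := ⟨by linarith, hSpos⟩
  have hTC1 : ContDiffOn ℝ 1 T (Set.Ioo (-S) S) := by
    rw [← zero_add (1 : WithTop ℕ∞), contDiffOn_succ_iff_deriv_of_isOpen isOpen_Ioo]
    refine ⟨fun x hx => (hTderiv x hx).differentiableAt.differentiableWithinAt, by simp, ?_⟩
    rw [contDiffOn_zero]
    have hTcont : ContinuousOn T (Set.Ioo (-S) S) := fun x hx =>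
      (hTderiv x hx).continuousAt.continuousWithinAt
    exact ((hcont.comp_continuousOn hTcont).inv₀
      fun x _ => (slopeDensity_pos hφ₀ hm (T x)).ne').congr fun x hx => (hTderiv x hx).deriv
  refine ⟨fun x => radiusOfSlope φ₀ m (T x), ?_, ?_, ?_, ?_, ?_, ?_, ?_⟩
  · rw [← one_add_one_eq_two, contDiffOn_succ_iff_deriv_of_isOpen isOpen_Ioo]
    exact ⟨fun x hx => (hφderiv x hx).differentiableAt.differentiableWithinAt, by simp,
      hTC1.congr fun x hx => (hφderiv x hx).deriv⟩
  · intro x _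
    unfold radiusOfSlope
    positivity
  · simp [hT0, radiusOfSlope]
  · rw [(hφderiv 0 h0mem).deriv, hT0]
  · intro x hx
    have heq : deriv (fun x => radiusOfSlope φ₀ m (T x)) =ᶠ[nhds x] T :=
      eventually_of_mem (isOpen_Ioo.mem_nhds hx) fun y hy => (hφderiv y hy).deriv
    rw [heq.deriv_eq, (hφderiv x hx).deriv, (hTderiv x hx).deriv]
    exact inv_slopeDensity_eq hφ₀ hm (T x)
  · refine radiusOfSlope_tendsto hφ₀ hm (tendsto_atTop.2 fun M => ?_)
    filter_upwards [Ioo_mem_nhdsLT (hlt M)] with x hx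
    obtain ⟨t, rfl⟩ := hsurj x ⟨(hgt M).trans hx.1, hx.2⟩
    rw [hTs]
    exact (hmono.lt_iff_lt.1 hx.1).le.trans (le_abs_self t)
  · refine radiusOfSlope_tendsto hφ₀ hm (tendsto_atTop.2 fun M => ?_)
    filter_upwards [Ioo_mem_nhdsGT (hgt (-M))] with x hx
    obtain ⟨t, rfl⟩ := hsurj x ⟨hx.1, hx.2.trans (hlt (-M))⟩
    rw [hTs]
    have := hmono.lt_iff_lt.1 hx.2
    exact le_trans (by linarith) (neg_le_abs t)
end

section
/- Let n ≥ 3 be an integer, φ₀ > 0, a = φ₀^{-2(n-1)}, and let φ : I → ℝ be a twice-differentiable positive function on an open interval I containing 0 satisfying φ''(s) = (n-1)(1+φ'(s)²)/φ(s), φ(0) = φ₀, φ'(0) = 0. Then for every s ∈ I, n(n-1)/(φ(s)²(1+φ'(s)²)) = n(n-1)·φ₀^{2(n-1)}·φ(s)^{-2n}. In particular this quantity is strictly positive everywhere. -/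
/-!
The catenoid ODE has the first integral `E = φ ^ (2(n-1)) / (1 + φ'²)`: the numerator of `E'` is
`2 φ ^ (2(n-1) - 1) φ' ((n-1)(1 + φ'²) - φ φ'')`, whose last factor vanishes by the ODE. Hence `E` is
constant on the interval `I`, equal to its value `φ₀ ^ (2(n-1))` at `0`, and solving this for
`1 + φ'²` gives the formula.
-/

/-- **The squared norm of the second fundamental form of the catenoid.**
If `φ` solves the catenoid ODE on an open interval `I` containing `0` with `φ 0 = φ₀ > 0`
and `φ' 0 = 0`, then `n(n-1)/(φ²(1+φ'²)) = n(n-1)·φ₀^(2(n-1))·φ^(-2n)` on `I`, and this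
quantity is strictly positive everywhere on `I`. -/
theorem catenoid_second_fundamental_form_norm
    (n : ℕ) (hn : 3 ≤ n) (φ₀ : ℝ) (hφ₀ : 0 < φ₀)
    (a : ℝ) (ha : a = φ₀ ^ (-(2 * ((n : ℤ) - 1))))
    (I : Set ℝ) (hIopen : IsOpen I) (hIconv : Convex ℝ I) (h0I : (0 : ℝ) ∈ I)
    (φ φ' φ'' : ℝ → ℝ)
    (hpos : ∀ s ∈ I, 0 < φ s)
    (hderiv1 : ∀ s ∈ I, HasDerivAt φ (φ' s) s)
    (hderiv2 : ∀ s ∈ I, HasDerivAt φ' (φ'' s) s)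
    (hode : ∀ s ∈ I, φ'' s = ((n : ℝ) - 1) * (1 + (φ' s) ^ 2) / φ s)
    (hinit : φ 0 = φ₀) (hinit' : φ' 0 = 0) :
    ∀ s ∈ I,
      ((n : ℝ) * ((n : ℝ) - 1)) / ((φ s) ^ 2 * (1 + (φ' s) ^ 2))
        = (n : ℝ) * ((n : ℝ) - 1) * φ₀ ^ (2 * (n - 1)) * (φ s) ^ (-(2 * (n : ℤ))) ∧
      0 < ((n : ℝ) * ((n : ℝ) - 1)) / ((φ s) ^ 2 * (1 + (φ' s) ^ 2)) := by
  intro s hs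
  -- Writing `n = k + 2` keeps the exponent `2(n-1) - 1 = 2k + 1` free of truncated subtraction.
  obtain ⟨k, rfl⟩ : ∃ k, n = k + 2 := ⟨n - 2, by omega⟩
  have hE : ∀ t ∈ I, HasDerivAt (fun t => φ t ^ (2 * k + 2) / (1 + φ' t ^ 2)) 0 t := by
    intro t ht
    have hφ := hpos t ht
    have hden : (1 + φ' t ^ 2) ≠ 0 := by positivity
    refine (((hderiv1 t ht).pow (2 * k + 2)).div
      (((hderiv2 t ht).pow 2).const_add 1) hden).congr_deriv ?_
    rw [hode t ht, div_eq_zero_iff]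
    left
    simp only [Pi.pow_apply, Nat.add_one_sub_one]
    push_cast
    field_simp
    ring
  have hconst : φ s ^ (2 * k + 2) / (1 + φ' s ^ 2) = φ₀ ^ (2 * k + 2) := by
    have h := hIopen.is_const_of_deriv_eq_zero hIconv.isPreconnected
      (fun t ht => (hE t ht).differentiableAt.differentiableWithinAt)
      (fun t ht => (hE t ht).deriv) hs h0I
    simpa [hinit, hinit'] using h
  have hφ := hpos s hs
  have hden : 0 < 1 + φ' s ^ 2 := by positivity
  have hn1 : (0 : ℝ) < ((k + 2 : ℕ) : ℝ) - 1 := by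
    push_cast
    linarith [(Nat.cast_nonneg k : (0 : ℝ) ≤ k)]
  refine ⟨?_, by positivity⟩
  have hexp : 2 * (k + 2 - 1) = 2 * k + 2 := by omega
  have hz : φ s ^ (-(2 * ((k + 2 : ℕ) : ℤ))) = (φ s ^ (2 * k + 2) * φ s ^ 2)⁻¹ := by
    rw [zpow_neg, ← pow_add]
    norm_cast
  rw [hexp, hz, ← hconst]
  field_simp
end

section
/- Let n ≥ 2 be an integer. Let h : Fin n → Fin n → Fin n → ℝ satisfy h i j k = h σ(i) σ(j) σ(k) for every permutation σ of the three positions (full symmetry), let λ : Fin n → ℝ satisfy ∑_i λ i = 0, and assume ∑_i h i i k = 0 for every k. Assume |A|² := ∑_i (λ i)² > 0. Define W = |A|^{-2}·∑_k (∑_i λ i · h i i k)², E₁ = ∑_{(i,j,k) pairwise distinct} (h i j k)², E₂ = (1/n)·∑_i ∑_{j ≠ i} ∑_{k ≠ i, k ≠ j} (h k k i − h j j i)², and E₃ = ((n+2)/(2n))·|A|^{-2}·∑_k ∑_{i ≠ j} (λ i · h j j k − λ j · h i i k)², where all sums over pairs of distinct indices are over ordered pairs. Then ∑_{i,j,k}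 (h i j k)² − W = (2/n)·W + E₁ + E₂ + E₃. -/
/-!
Write `D = ∑ₖ ∑ᵢ (h i i k)²` and `d = ∑ᵢ (h i i i)²`. Everything reduces to these two numbers,
the sum `E₁` over pairwise distinct indices, and `W`:

* inclusion–exclusion on coinciding indices gives `∑ h² = E₁ + 3 D - 2 d`;
* since `∑ⱼ h j j i = 0`, expanding the squares gives `n E₂ = 2 (n - 1) D - 2 n d`;
* Lagrange's identity gives `E₃ = ((n + 2) / n) (D - W)`.

Substituting, both sides of the claim equal `E₁ + 3 D - 2 d - W`.
-/

open Finset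

/-- Inclusion–exclusion over the coincidences among the three indices. -/
lemma sum_sq_eq_distinct_add (n : ℕ) (h : Fin n → Fin n → Fin n → ℝ)
    (hsymm1 : ∀ i j k, h i j k = h j i k) (hsymm2 : ∀ i j k, h i j k = h i k j) :
    ∑ i, ∑ j, ∑ k, (h i j k) ^ 2
      = (∑ i, ∑ j, ∑ k, if i ≠ j ∧ i ≠ k ∧ j ≠ k then (h i j k) ^ 2 else 0)
        + 3 * (∑ k, ∑ i, (h i i k) ^ 2) - 2 * ∑ i, (h i i i) ^ 2 := by
  have pointwise : ∀ i j k, (h i j k) ^ 2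
      = (if i ≠ j ∧ i ≠ k ∧ j ≠ k then (h i j k) ^ 2 else 0)
        + (if i = j then (h i i k) ^ 2 else 0) + (if i = k then (h i i j) ^ 2 else 0)
        + (if j = k then (h j j i) ^ 2 else 0)
        - 2 * (if i = j then (if i = k then (h i i i) ^ 2 else 0) else 0) := by
    intro i j k
    by_cases hij : i = j
    · subst hij
      by_cases hik : i = k
      · subst hik
        simp
        ring
      · simp [hik]
    · by_cases hik : i = k
      · subst hik
        simp [hij, Ne.symm hij, hsymm2 i j i]
      · by_cases hjk : j = k
        · subst hjk
          simp [hij, hsymm1 i j j, hsymm2 j i j]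
        · simp [hij, hik, hjk]
  have first : ∑ i, ∑ j, ∑ k, (if i = j then (h i i k) ^ 2 else 0)
      = ∑ k, ∑ i, (h i i k) ^ 2 := by
    rw [sum_comm (s := univ) (t := univ) (f := fun k i => (h i i k) ^ 2)]
    refine sum_congr rfl fun i _ => ?_
    rw [sum_comm]
    simp
  have second : ∑ i, ∑ j, ∑ k, (if i = k then (h i i j) ^ 2 else 0)
      = ∑ k, ∑ i, (h i i k) ^ 2 := by
    rw [sum_comm]
    simp
  have third : ∑ i, ∑ j, ∑ k, (if j = k then (h j j i) ^ 2 else 0)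
      = ∑ k, ∑ i, (h i i k) ^ 2 := by
    simp
  have triple : ∑ i, ∑ j, ∑ k, (if i = j then (if i = k then (h i i i) ^ 2 else 0) else 0)
      = ∑ i, (h i i i) ^ 2 := by
    refine sum_congr rfl fun i _ => ?_
    rw [sum_comm]
    simp
  rw [sum_congr rfl fun i _ => sum_congr rfl fun j _ => sum_congr rfl fun k _ => pointwise i j k]
  simp only [sum_sub_distrib, sum_add_distrib, ← mul_sum]
  rw [first, second, third, triple]
  ring

/-- The contribution of one index `i` to `n E₂`, with `a j = h j j i`. -/
lemma sum_sq_sub_of_sum_eq_zero (n : ℕ) (a : Fin n → ℝ) (ha : ∑ j, a j = 0) (i : Fin n) :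
    (∑ j, ∑ k, if j ≠ i ∧ k ≠ i ∧ k ≠ j then (a k - a j) ^ 2 else 0)
      = 2 * ((n : ℝ) - 1) * ∑ j, (a j) ^ 2 - 2 * n * (a i) ^ 2 := by
  -- The terms with `k = j` vanish, so only the row `j = i` and the column `k = i` are removed;
  -- their common term `j = k = i` is zero.
  have pointwise : ∀ j k, (if j ≠ i ∧ k ≠ i ∧ k ≠ j then (a k - a j) ^ 2 else 0)
      = ((a k) ^ 2 + (a j) ^ 2 - 2 * (a j * a k))
        - (if j = i then (a k - a i) ^ 2 else 0) - (if k = i then (a j - a i) ^ 2 else 0) := by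
    intro j k
    by_cases hj : j = i
    · subst hj
      by_cases hk : k = j
      · subst hk
        simp
        ring
      · simp [hk]
        ring
    · by_cases hk : k = i
      · subst hk
        simp [hj]
        ring
      · by_cases hkj : k = j
        · subst hkj
          simp [hk]
          ring
        · simp [hj, hk, hkj]
          ring
  have centred : ∑ j, (a j - a i) ^ 2 = ∑ j, (a j) ^ 2 + n * (a i) ^ 2 := by
    simp only [sub_sq, sum_add_distrib, sum_sub_distrib, ← sum_mul, ← mul_sum, ha]
    simp
  have row : ∑ j, ∑ k, (if j = i then (a k - a i) ^ 2 else 0) = ∑ k, (a k - a i) ^ 2 := by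
    rw [sum_comm]
    simp
  have column : ∑ j, ∑ k, (if k = i then (a j - a i) ^ 2 else 0) = ∑ j, (a j - a i) ^ 2 := by
    simp
  rw [sum_congr rfl fun j _ => sum_congr rfl fun k _ => pointwise j k]
  simp only [sum_sub_distrib, sum_add_distrib]
  rw [row, column, centred]
  simp only [← mul_sum, ha, sum_const, card_univ, Fintype.card_fin, nsmul_eq_mul]
  simp
  ring

/-- Lagrange's identity. -/
lemma sum_sq_cross (n : ℕ) (l a : Fin n → ℝ) :
    (∑ i, ∑ j, if i ≠ j then (l i * a j - l j * a i) ^ 2 else 0)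
      = 2 * (∑ i, (l i) ^ 2) * (∑ i, (a i) ^ 2) - 2 * (∑ i, l i * a i) ^ 2 := by
  have pointwise : ∀ i j, (if i ≠ j then (l i * a j - l j * a i) ^ 2 else 0)
      = (l i) ^ 2 * (a j) ^ 2 + (a i) ^ 2 * (l j) ^ 2 - 2 * ((l i * a i) * (l j * a j)) := by
    intro i j
    by_cases hij : i = j
    · subst hij
      simp
      ring
    · simp [hij]
      ring
  rw [sum_congr rfl fun i _ => sum_congr rfl fun j _ => pointwise i j]
  simp only [sum_sub_distrib, sum_add_distrib, ← mul_sum, ← sum_mul]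
  ring

/-- **The refined Simons identity (algebraic form).**
Let `n ≥ 2`, let `h i j k` be fully symmetric with `∑ᵢ h i i k = 0` for all `k`
(the covariant derivative of the second fundamental form in a diagonalizing frame),
and let `l` (the principal curvatures) satisfy `∑ᵢ l i = 0` with `|A|² = ∑ᵢ (l i)² > 0`.
With `W = |A|⁻²·∑ₖ(∑ᵢ l i·h i i k)²` and the nonnegative error terms `E₁, E₂, E₃`,
one has `∑ h² − W = (2/n)·W + E₁ + E₂ + E₃`. -/
theorem refined_simons_identity
    (n : ℕ) (hn : 2 ≤ n)
    (h : Fin n → Fin n → Fin n → ℝ)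
    (hsymm1 : ∀ i j k, h i j k = h j i k)
    (hsymm2 : ∀ i j k, h i j k = h i k j)
    (l : Fin n → ℝ)
    (htrace : ∑ i, l i = 0)
    (hcodazzi : ∀ k, ∑ i, h i i k = 0)
    (hA : 0 < ∑ i, (l i) ^ 2) :
    (∑ i, ∑ j, ∑ k, (h i j k) ^ 2)
        - (∑ i, (l i) ^ 2)⁻¹ * ∑ k, (∑ i, l i * h i i k) ^ 2
      = (2 / (n : ℝ)) * ((∑ i, (l i) ^ 2)⁻¹ * ∑ k, (∑ i, l i * h i i k) ^ 2)
        + (∑ i, ∑ j, ∑ k, if i ≠ j ∧ i ≠ k ∧ j ≠ k then (h i j k) ^ 2 else 0)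
        + (1 / (n : ℝ)) *
            (∑ i, ∑ j, ∑ k, if j ≠ i ∧ k ≠ i ∧ k ≠ j then (h k k i - h j j i) ^ 2 else 0)
        + (((n : ℝ) + 2) / (2 * (n : ℝ))) * (∑ i, (l i) ^ 2)⁻¹ *
            (∑ k, ∑ i, ∑ j, if i ≠ j then (l i * h j j k - l j * h i i k) ^ 2 else 0) := by
  have hn0 : (n : ℝ) ≠ 0 := by
    have : n ≠ 0 := by omega
    exact_mod_cast this
  have hE2 : (∑ i, ∑ j, ∑ k, if j ≠ i ∧ k ≠ i ∧ k ≠ j then (h k k i - h j j i) ^ 2 else 0)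
      = 2 * ((n : ℝ) - 1) * (∑ k, ∑ i, (h i i k) ^ 2) - 2 * n * ∑ i, (h i i i) ^ 2 := by
    rw [sum_congr rfl fun i _ =>
      sum_sq_sub_of_sum_eq_zero n (fun j => h j j i) (hcodazzi i) i]
    simp only [sum_sub_distrib, ← mul_sum]
  have hE3 : (∑ k, ∑ i, ∑ j, if i ≠ j then (l i * h j j k - l j * h i i k) ^ 2 else 0)
      = 2 * (∑ i, (l i) ^ 2) * (∑ k, ∑ i, (h i i k) ^ 2)
        - 2 * ∑ k, (∑ i, l i * h i i k) ^ 2 := by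
    rw [sum_congr rfl fun k _ => sum_sq_cross n l (fun j => h j j k)]
    simp only [sum_sub_distrib, ← mul_sum]
  rw [sum_sq_eq_distinct_add n h hsymm1 hsymm2, hE2, hE3]
  have hA0 := hA.ne'
  -- Only field arithmetic in the aggregate quantities remains.
  generalize (∑ i, ∑ j, ∑ k, if i ≠ j ∧ i ≠ k ∧ j ≠ k then (h i j k) ^ 2 else 0) = E₁
  generalize ∑ k, ∑ i, (h i i k) ^ 2 = D
  generalize ∑ k, (∑ i, l i * h i i k) ^ 2 = V
  generalize ∑ i, (h i i i) ^ 2 = d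
  generalize ∑ i, (l i) ^ 2 = S at hA0 ⊢
  field_simp
  ring
end

section
/- Let n ≥ 2 be an integer. Let h : Fin n → Fin n → Fin n → ℝ satisfy h i j k = h σ(i) σ(j) σ(k) for every permutation σ of the three positions (full symmetry), let λ : Fin n → ℝ satisfy ∑_i λ i = 0, and assume ∑_i h i i k = 0 for every k. Then (∑_i (λ i)²)·(∑_{i,j,k} (h i j k)²) ≥ (1 + 2/n)·∑_k (∑_i λ i · h i i k)². -/
open Finset

/-!
Fix `k` and put `a i = h i i k`, so that `∑ a i = 0`. Cauchy–Schwarz gives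
`(∑ l i * a i)² ≤ |l|² |a|²`. By full symmetry each `h i i k` with `i ≠ k` occurs three times in
`|h|²`, so discarding the entries with three distinct indices leaves
`|h|² ≥ ∑ₖ (3 ∑ᵢ (h i i k)² - 2 (h k k k)²)` (`sum_sq_ge_diag`). Finally the trace condition
yields `a k² ≤ (1 - 1/n) |a|²` (`card_mul_sq_le`), whence `3|a|² - 2 a k² ≥ (1 + 2/n) |a|²`.
-/

/-- An entry of a vector with zero sum is controlled by the others: Cauchy–Schwarz is applied to
`a k = -∑_{i ≠ k} a i`. -/
lemma card_mul_sq_le {n : ℕ} (a : Fin n → ℝ) (ha : ∑ i, a i = 0) (k : Fin n) :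
    (n : ℝ) * a k ^ 2 ≤ ((n : ℝ) - 1) * ∑ i, a i ^ 2 := by
  have hcs := sq_sum_le_card_mul_sum_sq (s := univ.erase k) (f := a)
  have h1 := add_sum_erase univ a (mem_univ k)
  have h2 := add_sum_erase univ (fun i => a i ^ 2) (mem_univ k)
  have hc : ((#(univ.erase k) : ℕ) : ℝ) = (n : ℝ) - 1 := by
    rw [card_erase_of_mem (mem_univ k), card_univ, Fintype.card_fin,
      Nat.cast_sub (Nat.one_le_of_lt k.isLt), Nat.cast_one]
  rw [hc] at hcs
  have h3 : ∑ i ∈ univ.erase k, a i = -a k := by linarith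
  rw [h3] at hcs
  rw [← h2]
  linarith

lemma sum_sq_ge_diag {n : ℕ} (h : Fin n → Fin n → Fin n → ℝ)
    (hsymm1 : ∀ i j k, h i j k = h j i k) (hsymm2 : ∀ i j k, h i j k = h i k j) :
    ∑ k, (3 * ∑ i, h i i k ^ 2 - 2 * h k k k ^ 2) ≤ ∑ i, ∑ j, ∑ k, h i j k ^ 2 := by
  -- the left summand is `h i j k ^ 2` when at least two indices agree, and `0` otherwise
  have hpt : ∑ i, ∑ j, ∑ k, ((if i = j then h i j k ^ 2 else 0)
      + (if j = k then h i j k ^ 2 else 0)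
      + (if i = k then h i j k ^ 2 else 0)
      - 2 * (if i = j then if j = k then h i j k ^ 2 else 0 else 0))
      ≤ ∑ i, ∑ j, ∑ k, h i j k ^ 2 := by
    refine sum_le_sum fun i _ => sum_le_sum fun j _ => sum_le_sum fun k _ => ?_
    have := sq_nonneg (h i j k)
    by_cases hij : i = j
    · subst hij
      by_cases hik : i = k <;> simp [hik] <;> linarith
    · by_cases hjk : j = k
      · subst hjk
        simp [hij]
      · by_cases hik : i = k
        · subst hik
          simp [hij, hjk]
        · simp [hij, hjk, hik, this]
  refine le_trans (le_of_eq ?_) hpt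
  have e1 : ∑ i, ∑ j, ∑ k, (if i = j then h i j k ^ 2 else 0) = ∑ k, ∑ i, h i i k ^ 2 := by
    rw [sum_comm (f := fun k i => h i i k ^ 2)]
    refine sum_congr rfl fun i _ => ?_
    rw [sum_comm]
    simp
  have e2 : ∑ i, ∑ j, ∑ k, (if j = k then h i j k ^ 2 else 0) = ∑ k, ∑ i, h i i k ^ 2 := by
    refine sum_congr rfl fun k _ => sum_congr rfl fun i _ => ?_
    simp [hsymm1 k i i, hsymm2 i k i]
  have e3 : ∑ i, ∑ j, ∑ k, (if i = k then h i j k ^ 2 else 0) = ∑ k, ∑ i, h i i k ^ 2 := by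
    rw [sum_comm (f := fun k i => h i i k ^ 2)]
    refine sum_congr rfl fun i _ => sum_congr rfl fun j _ => ?_
    simp [hsymm2 i j i]
  have e4 : ∑ i, ∑ j, ∑ k, (if i = j then if j = k then h i j k ^ 2 else 0 else 0)
      = ∑ k, h k k k ^ 2 := by
    refine sum_congr rfl fun i _ => ?_
    rw [sum_comm]
    simp
  simp only [sum_add_distrib, sum_sub_distrib, ← mul_sum, e1, e2, e3, e4]
  ring

/-- **The algebraic Simons inequality (Schoen–Simon–Yau form).**
Let `n ≥ 2`, let `h i j k` be fully symmetric with `∑ᵢ h i i k = 0` for all `k`, and let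
`l` satisfy `∑ᵢ l i = 0`.  Then
`(∑ᵢ (l i)²)·(∑ h²) ≥ (1 + 2/n)·∑ₖ(∑ᵢ l i·h i i k)²`,
i.e. `|A|²·|∇A|² ≥ (1 + 2/n)·|A|²·|∇|A||²`. -/
theorem simons_inequality_algebraic
    (n : ℕ) (hn : 2 ≤ n)
    (h : Fin n → Fin n → Fin n → ℝ)
    (hsymm1 : ∀ i j k, h i j k = h j i k)
    (hsymm2 : ∀ i j k, h i j k = h i k j)
    (l : Fin n → ℝ)
    (htrace : ∑ i, l i = 0)
    (hcodazzi : ∀ k, ∑ i, h i i k = 0) :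
    (∑ i, (l i) ^ 2) * (∑ i, ∑ j, ∑ k, (h i j k) ^ 2)
      ≥ (1 + 2 / (n : ℝ)) * ∑ k, (∑ i, l i * h i i k) ^ 2 := by
  have hn0 : (0 : ℝ) < n := by
    have : 0 < n := by omega
    exact_mod_cast this
  have hL : 0 ≤ ∑ i, l i ^ 2 := sum_nonneg fun i _ => sq_nonneg _
  refine le_trans ?_ (mul_le_mul_of_nonneg_left (sum_sq_ge_diag h hsymm1 hsymm2) hL)
  rw [mul_sum, mul_sum]
  refine sum_le_sum fun k _ => ?_
  have hcs := sum_mul_sq_le_sq_mul_sq univ l (fun i => h i i k)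
  have hk := card_mul_sq_le (fun i => h i i k) (hcodazzi k) k
  calc (1 + 2 / (n : ℝ)) * (∑ i, l i * h i i k) ^ 2
      ≤ (1 + 2 / (n : ℝ)) * ((∑ i, l i ^ 2) * ∑ i, h i i k ^ 2) :=
        mul_le_mul_of_nonneg_left hcs (by positivity)
    _ = (∑ i, l i ^ 2) * ((1 + 2 / (n : ℝ)) * ∑ i, h i i k ^ 2) := by ring
    _ ≤ (∑ i, l i ^ 2) * (3 * ∑ i, h i i k ^ 2 - 2 * h k k k ^ 2) := by
        refine mul_le_mul_of_nonneg_left ?_ hL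
        refine le_of_mul_le_mul_left ?_ hn0
        have : (n : ℝ) * ((1 + 2 / (n : ℝ)) * ∑ i, h i i k ^ 2)
            = ((n : ℝ) + 2) * ∑ i, h i i k ^ 2 := by
          field_simp
        rw [this]
        linarith
end

section
/- Let n ≥ 2 be an integer. Let h : Fin n → Fin n → Fin n → ℝ satisfy h i j k = h σ(i) σ(j) σ(k) for every permutation σ of the three positions (full symmetry) and ∑_i h i i k = 0 for every k, and let λ : Fin n → ℝ. Assume: (a) for every i and all j, k with j ≠ i, k ≠ i, j ≠ k one has h k k i = h j j i; (b) for all i, j, k one has λ i · h j j k = λ j · h i i k; and (c) there exist indices i₀ and j₀ ≠ i₀ with h j₀ j₀ i₀ ≠ 0. Then λ i₀ = −(n−1)·λ j for every j ≠ i₀. -/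
/-!
By (a), all the entries `h k k i₀` with `k ≠ i₀` equal `c := h j₀ j₀ i₀`, so the trace condition
forces `h i₀ i₀ i₀ = -(n - 1) c`. Then (b) at `(i₀, j, i₀)` reads `l i₀ * c = -(n - 1) l j * c`,
and `c ≠ 0` cancels.
-/

open Finset

/-- **Consequence of the vanishing of `E₂` and `E₃`: the catenoid eigenvalue structure.**
Let `n ≥ 2`, let `h i j k` be fully symmetric with `∑ᵢ h i i k = 0` for all `k`, and let
`l` be given.  Assume (a) `h k k i = h j j i` whenever `j ≠ i`, `k ≠ i`, `j ≠ k`;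
(b) `l i·h j j k = l j·h i i k` for all `i, j, k`; and (c) `h j₀ j₀ i₀ ≠ 0` for some
`j₀ ≠ i₀`.  Then `l i₀ = −(n−1)·l j` for every `j ≠ i₀`. -/
theorem E2_E3_vanishing_eigenvalue_structure
    (n : ℕ) (hn : 2 ≤ n)
    (h : Fin n → Fin n → Fin n → ℝ)
    (hsymm1 : ∀ i j k, h i j k = h j i k)
    (hsymm2 : ∀ i j k, h i j k = h i k j)
    (hcodazzi : ∀ k, ∑ i, h i i k = 0)
    (l : Fin n → ℝ)
    (ha : ∀ i j k, j ≠ i → k ≠ i → j ≠ k → h k k i = h j j i)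
    (hb : ∀ i j k, l i * h j j k = l j * h i i k)
    (i₀ j₀ : Fin n) (hne : j₀ ≠ i₀) (hc : h j₀ j₀ i₀ ≠ 0) :
    ∀ j, j ≠ i₀ → l i₀ = -((n : ℝ) - 1) * l j := by
  intro j hj
  have hoff : ∀ k, k ≠ i₀ → h k k i₀ = h j₀ j₀ i₀ := by
    intro k hk
    by_cases hkj : j₀ = k
    · rw [hkj]
    · exact ha i₀ j₀ k hne hk hkj
  -- The trace condition expresses the diagonal entry through the `n - 1` equal ones.
  have hdiag : h i₀ i₀ i₀ = -((n : ℝ) - 1) * h j₀ j₀ i₀ := by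
    have htrace := hcodazzi i₀
    rw [← Finset.add_sum_erase _ _ (Finset.mem_univ i₀),
      Finset.sum_congr rfl (fun k hk => hoff k (Finset.ne_of_mem_erase hk)),
      Finset.sum_const, Finset.card_erase_of_mem (Finset.mem_univ i₀), Finset.card_univ,
      Fintype.card_fin, nsmul_eq_mul, Nat.cast_sub (by omega), Nat.cast_one] at htrace
    linarith
  have hbj := hb i₀ j i₀
  rw [hoff j hj, hdiag] at hbj
  apply mul_right_cancel₀ hc
  linarith
end
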